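/- Let R be a commutative ring and let T = R ⋉ R be the trivial extension of R by itself. Then the finitistic projective dimensions of T and of R coincide: for every nonnegative integer n, every T-module of finite projective dimension has projective dimension at most n over T if and only if every R-module of finite projective dimension has projective dimension at most n over R. -/

import Mathlib

open CategoryTheory

noncomputable section

universe u

/-- The `j`-th Ext group of the `R`-modules `M` and `N`. -/
def extGroup (R : Type u) [CommRing R] (M N : ModuleCat.{u} R) (j : ℕ) : ModuleCat R :=
  ((Ext R (ModuleCat.{u} R) j).obj (Opposite.op M)).obj N

/-- `Ext_R^j(M, N) = 0`. -/
def ExtVanish (R : Type u) [CommRing R] (M N : ModuleCat.{u} R) (j : ℕ) : Prop :=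
  Subsingleton (extGroup R M N j)

/-- The projective dimension of `M` is at most `n`
(via the standard Ext-vanishing characterization). -/
def ProjDimLE (R : Type u) [CommRing R] (M : ModuleCat.{u} R) (n : ℕ) : Prop :=
  ∀ (N : ModuleCat.{u} R) (j : ℕ), n < j → ExtVanish R M N j

/-- `M` has finite projective dimension. -/
def HasFinProjDim (R : Type u) [CommRing R] (M : ModuleCat.{u} R) : Prop :=
  ∃ n, ProjDimLE R M n

/-- `R` is a coherent ring: every finitely generated ideal is finitely presented. -/
def IsCoherentRing (R : Type u) [CommRing R] : Prop :=
  ∀ I : Ideal R, I.FG → Module.FinitePresentation R I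

open CategoryTheory Limits

theorem extVanish_iff (R : Type u) [CommRing R] (M N : ModuleCat.{u} R) (j : ℕ) :
    ExtVanish R M N (j + 1) ↔ Subsingleton (Abelian.Ext.{u} M N (j + 1)) := by
  let P := projectiveResolution M
  have h1 : ExtVanish R M N (j + 1) ↔ (P.complex.linearYonedaObj R N).ExactAt (j + 1) := by
    rw [HomologicalComplex.exactAt_iff_isZero_homology, ← (P.isoExt (R := R) (j + 1) N).isZero_iff,
      ModuleCat.isZero_iff_subsingleton]
    rfl
  rw [h1, HomologicalComplex.exactAt_iff' _ j (j + 1) (j + 2) (by simp) (by simp),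
    ShortComplex.moduleCat_exact_iff]
  have h2 : (∀ (x₂ : P.complex.X (j+1) ⟶ N), P.complex.d (j+2) (j+1) ≫ x₂ = 0 →
      ∃ x₁ : P.complex.X j ⟶ N, P.complex.d (j+1) j ≫ x₁ = x₂) ↔
      Subsingleton (Abelian.Ext.{u} M N (j + 1)) := by
    constructor
    · intro h
      refine subsingleton_of_forall_eq 0 fun y => ?_
      obtain ⟨f, hf, rfl⟩ := P.extMk_surjective y (j+2) rfl
      exact (P.extMk_eq_zero_iff f (j+2) rfl hf j rfl).2 (h f hf)
    · intro h f hf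
      exact (P.extMk_eq_zero_iff f (j+2) rfl hf j rfl).1 (Subsingleton.elim _ _)
  exact h2

theorem projDimLE_iff (R : Type u) [CommRing R] (M : ModuleCat.{u} R) (n : ℕ) :
    ProjDimLE R M n ↔ HasProjectiveDimensionLE M n := by
  constructor
  · intro h
    refine HasProjectiveDimensionLT.mk fun i hi Y e => ?_
    obtain ⟨i, rfl⟩ : ∃ k, i = k + 1 := ⟨i - 1, by omega⟩
    have := (extVanish_iff R M Y i).1 (h Y (i+1) (by omega))
    exact Subsingleton.elim _ _
  · intro h N j hj
    obtain ⟨i, rfl⟩ : ∃ k, j = k + 1 := ⟨j - 1, by omega⟩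
    exact (extVanish_iff R M N i).2 (HasProjectiveDimensionLT.subsingleton M (n+1) (i+1) (by omega) N)

theorem hasPD_map {C D : Type*} [Category* C] [Category* D] [Abelian C] [Abelian D]
    [EnoughProjectives C] (G : C ⥤ D) [G.Additive] [PreservesFiniteLimits G]
    [PreservesFiniteColimits G] [G.PreservesProjectiveObjects] (n : ℕ) (M : C)
    (h : HasProjectiveDimensionLE M n) : HasProjectiveDimensionLE (G.obj M) n := by
  induction n generalizing M with
  | zero =>
    rw [← projective_iff_hasProjectiveDimensionLE_zero] at h ⊢
    exact G.projective_obj _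
  | succ n ih =>
    rcases EnoughProjectives.presentation M with ⟨⟨P, f⟩⟩
    let T := ShortComplex.mk (kernel.ι f) f (kernel.condition f)
    have T_exact : T.ShortExact := { exact := ShortComplex.exact_kernel f }
    have TS_exact : (T.map G).ShortExact := T_exact.map_of_exact G
    have : Projective (T.map G).X₂ := G.projective_obj _
    have := (T_exact.hasProjectiveDimensionLT_X₃_iff n ‹_›).mp ‹_›
    exact (TS_exact.hasProjectiveDimensionLT_X₃_iff n ‹_›).mpr (ih (kernel f) this)

theorem exists_h {R : Type u} [CommRing R] {P : Type u} [AddCommGroup P] [Module R P]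
    [Module (TrivSqZeroExt R R) P] [IsScalarTower R (TrivSqZeroExt R R) P]
    [Module.Projective (TrivSqZeroExt R R) P] :
    ∃ h : P →ₗ[R] P, ∀ p, h ((TrivSqZeroExt.inr 1 : TrivSqZeroExt R R) • p) +
      (TrivSqZeroExt.inr 1 : TrivSqZeroExt R R) • h p = p := by
  obtain ⟨s, hs⟩ := Module.Projective.out (R := TrivSqZeroExt R R) (P := P)
  let g := (Finsupp.linearCombination (TrivSqZeroExt R R) (id : P → P)).restrictScalars R
  let k : TrivSqZeroExt R R →ₗ[R] TrivSqZeroExt R R :=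
      { toFun := fun t => TrivSqZeroExt.inl t.snd
        map_add' := by intro a b; ext <;> simp
        map_smul' := by intro a b; ext <;> simp }
  have hk (t : TrivSqZeroExt R R) : k ((TrivSqZeroExt.inr 1 : TrivSqZeroExt R R) * t) +
      (TrivSqZeroExt.inr 1 : TrivSqZeroExt R R) * k t = t := by
    ext <;> simp [k]
  let K : (P →₀ TrivSqZeroExt R R) →ₗ[R] (P →₀ TrivSqZeroExt R R) := Finsupp.mapRange.linearMap k
  have hK (t : P →₀ TrivSqZeroExt R R) : K ((TrivSqZeroExt.inr 1 : TrivSqZeroExt R R) • t) +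
      (TrivSqZeroExt.inr 1 : TrivSqZeroExt R R) • K t = t := by
    ext1 x
    simpa [K] using hk (t x)
  refine ⟨g ∘ₗ K ∘ₗ s.restrictScalars R, fun p => ?_⟩
  have := congrArg (Finsupp.linearCombination (TrivSqZeroExt R R) (id : P → P)) (hK (s p))
  rw [map_add, map_smul (Finsupp.linearCombination _ _), hs p] at this
  simpa [g] using this

theorem exists_retr {R : Type u} [CommRing R] {K P : Type u} [AddCommGroup P] [Module R P]
    [Module (TrivSqZeroExt R R) P] [IsScalarTower R (TrivSqZeroExt R R) P]
    [AddCommGroup K] [Module R K]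
    [Module (TrivSqZeroExt R R) K] [IsScalarTower R (TrivSqZeroExt R R) K]
    [Module.Projective (TrivSqZeroExt R R) K] (i : K →ₗ[TrivSqZeroExt R R] P)
    (ρ : P →ₗ[R] K) (hρ : ∀ k, ρ (i k) = k) :
    ∃ σ : P →ₗ[TrivSqZeroExt R R] K, ∀ k, σ (i k) = k := by
  obtain ⟨h, hh⟩ := exists_h (R := R) (P := K)
  let ε : TrivSqZeroExt R R := TrivSqZeroExt.inr 1
  have hε : ε * ε = 0 := by ext <;> simp [ε]
  have ht (t : TrivSqZeroExt R R) : t = t.fst • 1 + t.snd • ε := by ext <;> simp [ε]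
  refine ⟨{ toFun := fun p => h (ρ (ε • p)) + ε • h (ρ p)
            map_add' := by intro a b; simp only [smul_add, map_add]; abel
            map_smul' := ?_ }, fun k => ?_⟩
  · intro t p
    have key (Q : Type u) [AddCommGroup Q] [Module R Q] [Module (TrivSqZeroExt R R) Q]
      [IsScalarTower R (TrivSqZeroExt R R) Q] (q : Q) : t • q = t.fst • q + t.snd • (ε • q) := by
      conv_lhs => rw [ht t]
      rw [add_smul, smul_assoc, smul_assoc, one_smul]
    have e2 (Q : Type u) [AddCommGroup Q] [Module (TrivSqZeroExt R R) Q] (q : Q) :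
      ε • ε • q = 0 := by rw [smul_smul, hε, zero_smul]
    have e3 (Q : Type u) [AddCommGroup Q] [Module R Q] [Module (TrivSqZeroExt R R) Q]
      [IsScalarTower R (TrivSqZeroExt R R) Q] (r : R) (q : Q) : ε • r • q = r • ε • q := by
      rw [smul_algebra_smul_comm]
    simp only [RingHom.id_apply, key, smul_add, e3, e2, map_add, map_smul, smul_zero, add_zero]
    abel
  · change h (ρ (ε • i k)) + ε • h (ρ (i k)) = k
    rw [← map_smul, hρ, hρ]
    exact hh k

theorem proj_restrict {R : Type u} [CommRing R] {P : Type u} [AddCommGroup P] [Module R P]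
    [Module (TrivSqZeroExt R R) P] [IsScalarTower R (TrivSqZeroExt R R) P]
    [Module.Projective (TrivSqZeroExt R R) P] : Module.Projective R P := by
  obtain ⟨s, hs⟩ := Module.Projective.out (R := TrivSqZeroExt R R) (P := P)
  have : Module.Free R (TrivSqZeroExt R R) := inferInstanceAs (Module.Free R (R × R))
  exact Module.Projective.of_split (M := P →₀ TrivSqZeroExt R R) (s.restrictScalars R)
    ((Finsupp.linearCombination (TrivSqZeroExt R R) (id : P → P)).restrictScalars R)
    (LinearMap.ext hs)

abbrev resF (R : Type u) [CommRing R] : ModuleCat.{u} (TrivSqZeroExt R R) ⥤ ModuleCat.{u} R :=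
  ModuleCat.restrictScalars.{u} (algebraMap R (TrivSqZeroExt R R))

abbrev extF (R : Type u) [CommRing R] : ModuleCat.{u} R ⥤ ModuleCat.{u} (TrivSqZeroExt R R) :=
  ModuleCat.extendScalars.{u, u, u} (algebraMap R (TrivSqZeroExt R R))

instance (R : Type u) [CommRing R] : (resF R).PreservesProjectiveObjects where
  projective_obj {X} h := by
    rw [← IsProjective.iff_projective] at h ⊢
    have : IsScalarTower R (TrivSqZeroExt R R) ((resF R).obj X) := ⟨fun r t x => by
      change _ = algebraMap R (TrivSqZeroExt R R) r • (t • (show X from x))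
      rw [Algebra.smul_def, mul_smul]; rfl⟩
    have : Module.Projective (TrivSqZeroExt R R) ((resF R).obj X) := h
    exact proj_restrict

theorem ext_pd (R : Type u) [CommRing R] (N : ModuleCat.{u} R) (n : ℕ)
    (h : HasProjectiveDimensionLE N n) : HasProjectiveDimensionLE ((extF R).obj N) n := by
  have adj := ModuleCat.extendRestrictScalarsAdj.{u} (algebraMap R (TrivSqZeroExt R R))
  have : (extF R).Additive := adj.left_adjoint_additive
  have := Functor.preservesProjectiveObjects_of_adjunction_of_preservesEpimorphisms adj
  have : Module.Free R (TrivSqZeroExt R R) := inferInstanceAs (Module.Free R (R × R))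
  have : PreservesFiniteLimits (extF R) :=
    ModuleCat.preservesFiniteLimits_extendScalars_of_flat (RingHom.flat_algebraMap_iff.2 inferInstance)
  exact hasPD_map _ _ _ h

def adj_retract {C D : Type*} [Category* C] [Category* D] {F : C ⥤ D} {G : D ⥤ C} (adj : F ⊣ G)
    (X : C) (Y : D) (e : X ≅ G.obj Y) : Retract X (G.obj (F.obj X)) where
  i := adj.unit.app X
  r := G.map ((adj.homEquiv X Y).symm e.hom) ≫ e.inv
  retract := by
    rw [← Category.assoc, ← adj.homEquiv_unit, Equiv.apply_symm_apply, e.hom_inv_id]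

theorem fwd_retract (R : Type u) [CommRing R] (N : ModuleCat.{u} R) :
    Nonempty (Retract N ((resF R).obj ((extF R).obj N))) := by
  let T := TrivSqZeroExt R R
  let adj := ModuleCat.extendRestrictScalarsAdj.{u} (algebraMap R (TrivSqZeroExt R R))
  let q : T →+* R := (TrivSqZeroExt.fstHom R R R : T →+* R)
  let _ : Module T N := Module.compHom N q
  let N' : ModuleCat.{u} T := ModuleCat.of T N
  let e : N →ₗ[R] (resF R).obj N' :=
    { toFun := fun x => x
      map_add' := fun _ _ => rfl
      map_smul' := fun r x => by
        change r • x = q (algebraMap R T r) • x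
        simp [q, T] }
  let e' : (resF R).obj N' →ₗ[R] N :=
    { toFun := fun x => x
      map_add' := fun _ _ => rfl
      map_smul' := fun r x => by
        change q (algebraMap R T r) • (show N from x) = r • (show N from x)
        simp [q, T] }
  exact ⟨adj_retract adj N N' ⟨ModuleCat.ofHom e, ModuleCat.ofHom e', rfl, rfl⟩⟩

theorem split_case (R : Type u) [CommRing R] (S : ShortComplex (ModuleCat.{u} (TrivSqZeroExt R R)))
    (hS : S.ShortExact) (h1 : Projective S.X₁) (h2 : Projective S.X₂)
    (h3 : Projective ((resF R).obj S.X₃)) : Projective S.X₃ := by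
  have hT : (S.map (resF R)).ShortExact := hS.map_of_exact _
  have : Projective (S.map (resF R)).X₃ := h3
  have sp := hT.splittingOfProjective
  rw [← IsProjective.iff_projective] at h1
  let _ : Module R S.X₁ := Module.compHom S.X₁ (algebraMap R (TrivSqZeroExt R R))
  let _ : Module R S.X₂ := Module.compHom S.X₂ (algebraMap R (TrivSqZeroExt R R))
  have : IsScalarTower R (TrivSqZeroExt R R) S.X₁ := ⟨fun r t x => by
      change _ = algebraMap R (TrivSqZeroExt R R) r • (t • x)
      rw [Algebra.smul_def, mul_smul]⟩
  have : IsScalarTower R (TrivSqZeroExt R R) S.X₂ := ⟨fun r t x => by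
      change _ = algebraMap R (TrivSqZeroExt R R) r • (t • x)
      rw [Algebra.smul_def, mul_smul]⟩
  let ρ : S.X₂ →ₗ[R] S.X₁ := sp.r.hom
  obtain ⟨σ, hσ⟩ := exists_retr (R := R) (K := S.X₁) (P := S.X₂)
    S.f.hom ρ (fun k => ConcreteCategory.congr_hom sp.f_r k)
  have sp2 := ShortComplex.Splitting.ofExactOfRetraction S hS.exact
    (ModuleCat.ofHom (X := S.X₂) (Y := S.X₁) σ) (by ext k; exact hσ k) hS.epi_g
  exact (Retract.mk sp2.s S.g sp2.s_g).projective

theorem key0 (R : Type u) [CommRing R] (k : ℕ) (M : ModuleCat.{u} (TrivSqZeroExt R R))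
    (h : HasProjectiveDimensionLE M k) (h' : Projective ((resF R).obj M)) : Projective M := by
  induction k generalizing M with
  | zero => exact (projective_iff_hasProjectiveDimensionLE_zero _).2 h
  | succ n ih =>
    rcases EnoughProjectives.presentation M with ⟨⟨P, f⟩⟩
    let T := ShortComplex.mk (kernel.ι f) f (kernel.condition f)
    have T_exact : T.ShortExact := { exact := ShortComplex.exact_kernel f }
    have TS_exact : (T.map (resF R)).ShortExact := T_exact.map_of_exact _
    have p2 : Projective (T.map (resF R)).X₂ := (resF R).projective_obj _
    have p3 : Projective (T.map (resF R)).X₃ := h'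
    have h1 := (T_exact.hasProjectiveDimensionLT_X₃_iff n ‹_›).mp ‹_›
    have h1' := TS_exact.hasProjectiveDimensionLT_X₁ 1 inferInstance inferInstance
    exact split_case R T T_exact
      (ih _ h1 (projective_iff_hasProjectiveDimensionLT_one.2 h1')) ‹_› h'

theorem key (R : Type u) [CommRing R] (n k : ℕ) (M : ModuleCat.{u} (TrivSqZeroExt R R))
    (h : HasProjectiveDimensionLE M k) (h' : HasProjectiveDimensionLE ((resF R).obj M) n) :
    HasProjectiveDimensionLE M n := by
  induction n generalizing M with
  | zero =>
    rw [← projective_iff_hasProjectiveDimensionLE_zero] at h' ⊢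
    exact key0 R k M h h'
  | succ n ih =>
    rcases EnoughProjectives.presentation M with ⟨⟨P, f⟩⟩
    let T := ShortComplex.mk (kernel.ι f) f (kernel.condition f)
    have T_exact : T.ShortExact := { exact := ShortComplex.exact_kernel f }
    have TS_exact : (T.map (resF R)).ShortExact := T_exact.map_of_exact _
    have p2 : Projective (T.map (resF R)).X₂ := (resF R).projective_obj _
    have h0 : HasProjectiveDimensionLT M (k + 2) := hasProjectiveDimensionLT_of_ge M (k+1) _ (by omega)
    have h1 := (T_exact.hasProjectiveDimensionLT_X₃_iff k ‹_›).mp h0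
    have h2 := (TS_exact.hasProjectiveDimensionLT_X₃_iff n p2).mp h'
    exact (T_exact.hasProjectiveDimensionLT_X₃_iff n ‹_›).mpr (ih _ h1 h2)

theorem stmt5 (R : Type u) [CommRing R] (n : ℕ) :
    (∀ (M : ModuleCat.{u} (TrivSqZeroExt R R)), HasFinProjDim (TrivSqZeroExt R R) M →
      ProjDimLE (TrivSqZeroExt R R) M n) ↔
    (∀ (M : ModuleCat.{u} R), HasFinProjDim R M → ProjDimLE R M n) := by
  simp only [HasFinProjDim, projDimLE_iff]
  constructor
  · rintro h N ⟨k, hk⟩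
    have h1 := h _ ⟨k, ext_pd R N k hk⟩
    have h2 := hasPD_map (resF R) _ _ h1
    obtain ⟨r⟩ := fwd_retract R N
    exact r.hasProjectiveDimensionLT (n + 1)
  · rintro h M ⟨k, hk⟩
    exact key R n k M hk (h _ ⟨k, hasPD_map (resF R) _ _ hk⟩)

end
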